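/- For i ∈ {1,2}, let G_i = (V_i, E_i) be a γ-robustly self-ordered graph, and let G = (V_1 ∪ V_2, E_1 ∪ E_2 ∪ E) be a graph of maximum degree d, where V_1 and V_2 are disjoint and every edge in E has exactly one endpoint in each V_i. If the maximum degree in G of every vertex in V_1 is strictly smaller than the minimum degree in G of every vertex in V_2, then G is γ/(2d+3)-robustly self-ordered. -/

import Mathlib

open Finset

/-! Let `μ` be a permutation, `k` the number of vertices of `V₁` that it carries into `V₂`, and
let `Δ` be the number of edges in the symmetric difference of `G` and `μ(G)`. Each of the `k`
vertices lands on a vertex of strictly larger degree, which therefore lies on an edge of `G` outside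
`μ(G)`; as these edges number `Δ / 2` and have two endpoints each, `k ≤ Δ`. Passing from `G` to the
two induced graphs `G₁` and `G₂` turns `Δ` into at most `Δ + 2kd`, since only edges at the `2k`
boundary vertices are affected.

The robustness of `Gᵢ` still controls `μ` on `Vᵢ` although `μ` does not preserve `Vᵢ`: one closes up
the partial map `Vᵢ → Vᵢ` to a permutation, and if `k ≠ 1` this can be done so that all the `k`
vertices leaving `Vᵢ` are moved. Hence `γ · #{v | μ v ≠ v} ≤ Δ + 2kd ≤ (2d + 1) Δ`. If `k = 1`, one
vertex on each side may become fixed, at an additional cost of `2γ ≤ 2d`; this is absorbed because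
`Δ` is even, hence at least `2`. -/

section

open scoped symmDiff

variable {α : Type*}

theorem disjoint_sym2 {s t : Finset α} (h : Disjoint s t) : Disjoint s.sym2 t.sym2 := by
  rw [disjoint_left] at *
  rintro ⟨a, b⟩
  grind [mk_mem_sym2_iff]

theorem exists_perm_fixing_compl_eqOn (S : Finset α) (μ : Equiv.Perm α) :
    ∃ ν : Equiv.Perm α, (∀ v ∉ S, ν v = v) ∧ ∀ v ∈ S, μ v ∈ S → ν v = μ v := by
  classical
  obtain ⟨g, hg⟩ := exists_equiv_extend_of_card_eq (Fintype.card_coe S)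
    (s := univ.filter fun v : S => μ v ∈ S) (f := fun v => μ v)
    (by simp [image_subset_iff]) ((μ.injective.comp Subtype.val_injective).injOn)
  refine ⟨Equiv.Perm.ofSubtype g, fun v hv => Equiv.Perm.ofSubtype_apply_of_not_mem g hv,
    fun v hv hμv => ?_⟩
  rw [Equiv.Perm.ofSubtype_apply_of_mem g hv, hg ⟨v, hv⟩ (by simpa using hμv)]

theorem exists_perm_comp_apply_ne {B : Finset α} (hB : #B ≠ 1) (ν : Equiv.Perm α) :
    ∃ σ : Equiv.Perm α, (∀ v ∉ B, σ v = v) ∧ ∀ v ∈ B, ν (σ v) ≠ v := by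
  classical
  -- A single fixed point is swapped with another point of `B`; several are permuted cyclically.
  obtain hC | hC := eq_empty_or_nonempty {v ∈ B | ν v = v}
  · exact ⟨1, fun _ _ => rfl, by simpa [filter_eq_empty_iff] using hC⟩
  obtain ⟨a, hC⟩ | hC := hC.exists_eq_singleton_or_nontrivial
  · have hfixed : ∀ v, v ∈ B ∧ ν v = v ↔ v = a := fun v => by
      rw [← mem_filter (p := fun v => ν v = v), hC, mem_singleton]
    obtain ⟨haB, hνa⟩ := (hfixed a).2 rfl
    obtain ⟨b, hb, hba⟩ := exists_mem_ne (s := B) (by have := card_pos.2 ⟨a, haB⟩; lia) a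
    refine ⟨Equiv.swap a b, fun v hv => ?_, fun v hv => ?_⟩
    · exact Equiv.swap_apply_of_ne_of_ne (by grind) (by grind)
    · have hνb : ν b ≠ a := fun h => hba (ν.injective (h.trans hνa.symm))
      grind
  · obtain ⟨σ, hσ, hsupp⟩ := (countable_toSet {v ∈ B | ν v = v}).exists_cycleOn
    have hσ_fix : ∀ v ∉ ({v ∈ B | ν v = v} : Finset α), σ v = v :=
      fun v hv => by_contra fun h => hv (hsupp h)
    refine ⟨σ, fun v hv => hσ_fix v fun h => hv (mem_filter.1 h).1, fun v hv => ?_⟩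
    by_cases hvC : v ∈ ({v ∈ B | ν v = v} : Finset α)
    · have hσv : ν (σ v) = σ v := (mem_filter.1 (hσ.1.mapsTo hvC)).2
      rw [hσv]
      exact hσ.apply_ne hC hvC
    · rw [hσ_fix v hvC]
      exact fun h => hvC (mem_filter.2 ⟨hv, h⟩)

variable [DecidableEq α]

/-- The degree of the vertex `v` in the graph with edge set `F`, a loop counting once. -/
def edgeDegree (F : Finset (Sym2 α)) (v : α) : ℕ :=
  #{e ∈ F | v ∈ e}

/-- The graph with vertex set `S` and edge set `F` is `γ`-robustly self-ordered. A permutation of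
`S` is encoded as a permutation of the ambient type which fixes every point outside `S`. -/
def IsRobustlySelfOrderedOn (γ : ℝ) (S : Finset α) (F : Finset (Sym2 α)) : Prop :=
  ∀ μ : Equiv.Perm α, (∀ v ∉ S, μ v = v) →
    γ * #{v ∈ S | μ v ≠ v} ≤ #(F ∆ F.image (Sym2.map μ))

theorem card_symmDiff_image (s : Finset α) {f : α → α} (hf : f.Injective) :
    #(s ∆ s.image f) = 2 * #(s \ s.image f) := by
  rw [symmDiff_def, sup_eq_union, card_union_of_disjoint disjoint_sdiff_sdiff,
    card_sdiff_comm (card_image_of_injective s hf), two_mul]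

theorem card_symmDiff_inter_add_card_symmDiff_inter_le
    {A A' P P' Q Q' : Finset α} (hPQ : Disjoint P Q) (hPQ' : Disjoint P' Q') :
    #((A ∩ P) ∆ (A' ∩ P')) + #((A ∩ Q) ∆ (A' ∩ Q')) ≤
      #(A ∆ A') + (#(A ∩ (P ∆ P')) + #(A ∩ (Q ∆ Q'))) := by
  have hP : (A ∩ P) ∆ (A' ∩ P') ⊆ (A ∩ P) ∆ (A' ∩ P') ∩ (A ∆ A') ∪ A ∩ (P ∆ P') := by
    grind [mem_symmDiff]
  have hQ : (A ∩ Q) ∆ (A' ∩ Q') ⊆ (A ∩ Q) ∆ (A' ∩ Q') ∩ (A ∆ A') ∪ A ∩ (Q ∆ Q') := by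
    grind [mem_symmDiff]
  have hdisj : Disjoint ((A ∩ P) ∆ (A' ∩ P') ∩ (A ∆ A')) ((A ∩ Q) ∆ (A' ∩ Q') ∩ (A ∆ A')) := by
    rw [disjoint_left] at *
    grind [mem_symmDiff]
  have hP_card := (card_le_card hP).trans (card_union_le _ _)
  have hQ_card := (card_le_card hQ).trans (card_union_le _ _)
  have hunion_card := card_le_card (union_subset (inter_subset_right (s₁ := (A ∩ P) ∆ (A' ∩ P')))
    (inter_subset_right (s₁ := (A ∩ Q) ∆ (A' ∩ Q')) (s₂ := A ∆ A')))
  rw [card_union_of_disjoint hdisj] at hunion_card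
  lia

theorem card_filter_apply_notMem (S : Finset α) (μ : Equiv.Perm α) :
    #{v ∈ S | μ v ∉ S} = #(S.image μ \ S) := by
  rw [sdiff_eq_filter, filter_image, card_image_of_injective _ μ.injective]

theorem image_perm_eq_self {U : Finset α} {μ : Equiv.Perm α} (hμ : ∀ v ∉ U, μ v = v) :
    U.image μ = U := by
  rw [← coe_inj, coe_image]
  exact Set.image_perm fun v hv => by_contra fun hvU => hv (hμ v hvU)

theorem sum_edgeDegree_eq (W : Finset α) (F : Finset (Sym2 α)) :
    ∑ w ∈ W, edgeDegree F w = ∑ e ∈ F, #{w ∈ W | w ∈ e} :=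
  sum_card_bipartiteAbove_eq_sum_card_bipartiteBelow _

theorem edgeDegree_mono {F F' : Finset (Sym2 α)} (h : F ⊆ F') (v : α) :
    edgeDegree F v ≤ edgeDegree F' v :=
  card_le_card (filter_subset_filter _ h)

theorem edgeDegree_image_map (F : Finset (Sym2 α)) (μ : Equiv.Perm α) (v : α) :
    edgeDegree (F.image (Sym2.map μ)) (μ v) = edgeDegree F v := by
  rw [edgeDegree, filter_image, card_image_of_injective _ (Sym2.map.injective μ.injective)]
  simp [edgeDegree, Sym2.mem_map]

theorem exists_mem_edge_of_edgeDegree_lt {F F' : Finset (Sym2 α)} {u w : α}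
    (h : edgeDegree F u < edgeDegree F' w) : ∃ e ∈ F', w ∈ e ∧ (e ∈ F → u ∉ e) := by
  obtain ⟨e, he, he'⟩ := exists_mem_notMem_of_card_lt_card h
  grind

theorem card_le_two_mul_card_sdiff_of_edgeDegree_lt {W : Finset α} {F F' : Finset (Sym2 α)}
    (h : ∀ w ∈ W, edgeDegree F w < edgeDegree F' w) : #W ≤ 2 * #(F' \ F) := by
  have hW : ∀ w ∈ W, 1 ≤ #((F' \ F).bipartiteAbove (· ∈ ·) w) := fun w hw => by
    obtain ⟨e, he, hwe, heF⟩ := exists_mem_edge_of_edgeDegree_lt (h w hw)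
    exact card_pos.2 ⟨e, mem_filter.2 ⟨mem_sdiff.2 ⟨he, fun h => heF h hwe⟩, hwe⟩⟩
  have hedge : ∀ e ∈ F' \ F, #(W.bipartiteBelow (· ∈ ·) e) ≤ 2 := fun e _ => by
    refine (card_le_card (t := e.toFinset) fun w hw => ?_).trans ?_
    · exact Sym2.mem_toFinset.2 (mem_filter.1 hw).2
    · grind [Sym2.card_toFinset]
  have := card_mul_le_card_mul _ hW hedge
  lia

theorem two_mul_card_eq_sum_edgeDegree {S : Finset α} {F : Finset (Sym2 α)} (hF : F ⊆ S.sym2)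
    (hloop : ∀ e ∈ F, ¬ e.IsDiag) : 2 * #F = ∑ v ∈ S, edgeDegree F v := by
  rw [sum_edgeDegree_eq, sum_const_nat (m := 2), mul_comm]
  intro e he
  rw [← Sym2.card_toFinset_of_not_isDiag e (hloop e he)]
  congr 1
  ext v
  simpa using mem_sym2_iff.1 (hF he) v

theorem nontrivial_or_nontrivial_of_edgeDegree_lt {S T : Finset α} {G : Finset (Sym2 α)}
    (hG : G ⊆ (S ∪ T).sym2) (hloop : ∀ e ∈ G, ¬ e.IsDiag) {u w : α} (hu : u ∈ S) (hw : w ∈ T)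
    (hlt : edgeDegree G u < edgeDegree G w) : S.Nontrivial ∨ T.Nontrivial := by
  obtain ⟨e, he, ⟨x, rfl⟩, hue⟩ := exists_mem_edge_of_edgeDegree_lt hlt
  have hxw : x ≠ w := fun h => hloop _ he (Sym2.mk_isDiag_iff.2 h.symm)
  have hxu : x ≠ u := fun h => hue he (h ▸ Sym2.mem_mk_right w x)
  obtain hx | hx := mem_union.1 (mem_sym2_iff.1 (hG he) x (Sym2.mem_mk_right w x))
  · exact .inl ⟨x, hx, u, hu, hxu⟩
  · exact .inr ⟨x, hx, w, hw, hxw⟩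

theorem ite_mem_sym2_symmDiff_add_le {S T S' T' : Finset α} (hST : Disjoint S T)
    (hST' : Disjoint S' T') (hunion : S ∪ T = S' ∪ T') {e : Sym2 α} (he : ¬ e.IsDiag) :
    (if e ∈ S.sym2 ∆ S'.sym2 then 1 else 0) + (if e ∈ T.sym2 ∆ T'.sym2 then 1 else 0) ≤
      #{w ∈ S ∆ S' | w ∈ e} := by
  induction e with | _ a b =>
  have hab : a ≠ b := he
  have hcount : #{w ∈ S ∆ S' | w ∈ s(a, b)} =
      (if a ∈ S ∆ S' then 1 else 0) + (if b ∈ S ∆ S' then 1 else 0) := by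
    rw [← sum_pair hab (f := fun w => if w ∈ S ∆ S' then 1 else 0), ← card_filter]
    congr 1
    ext w
    simp [and_comm]
  have hside : ∀ x, (x ∈ S → x ∉ T) ∧ (x ∈ S' → x ∉ T') ∧ (x ∈ S ∨ x ∈ T ↔ x ∈ S' ∨ x ∈ T') :=
    fun x => ⟨fun h => disjoint_left.1 hST h, fun h => disjoint_left.1 hST' h,
      by simp only [← mem_union, hunion]⟩
  have ha := hside a
  have hb := hside b
  rw [hcount]
  simp only [mem_symmDiff, mk_mem_sym2_iff]
  clear hST hST' hunion he hcount hside
  grind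

theorem card_inter_sym2_symmDiff_add_le {S T S' T' : Finset α} (hST : Disjoint S T)
    (hST' : Disjoint S' T') (hunion : S ∪ T = S' ∪ T') {G : Finset (Sym2 α)}
    (hloop : ∀ e ∈ G, ¬ e.IsDiag) :
    #(G ∩ (S.sym2 ∆ S'.sym2)) + #(G ∩ (T.sym2 ∆ T'.sym2)) ≤ ∑ w ∈ S ∆ S', edgeDegree G w := by
  rw [sum_edgeDegree_eq, ← filter_mem_eq_inter, ← filter_mem_eq_inter, card_filter, card_filter,
    ← sum_add_distrib]
  exact sum_le_sum fun e he => ite_mem_sym2_symmDiff_add_le hST hST' hunion (hloop e he)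

theorem card_symmDiff_image_le_of_eqOn {S : Finset α} {F : Finset (Sym2 α)} (hF : F ⊆ S.sym2)
    {μ ν : Equiv.Perm α} (hν : ∀ v ∈ S, μ v ∈ S → ν v = μ v) :
    #(F ∆ F.image (Sym2.map ν)) ≤ #(F ∆ F.image (Sym2.map μ)) := by
  rw [card_symmDiff_image F (Sym2.map.injective ν.injective),
    card_symmDiff_image F (Sym2.map.injective μ.injective)]
  refine Nat.mul_le_mul_left 2 (card_le_card fun e he => ?_)
  rw [mem_sdiff] at he ⊢
  refine ⟨he.1, fun heμ => he.2 ?_⟩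
  obtain ⟨f, hf, rfl⟩ := mem_image.1 heμ
  refine mem_image.2 ⟨f, hf, Sym2.map_congr fun v hv => hν v (mem_sym2_iff.1 (hF hf) v hv) ?_⟩
  exact mem_sym2_iff.1 (hF he.1) _ (Sym2.mem_map.2 ⟨v, hv, rfl⟩)

namespace IsRobustlySelfOrderedOn

variable {γ : ℝ} {S : Finset α} {F : Finset (Sym2 α)}

theorem mul_card_moved_le_of_eqOn (h : IsRobustlySelfOrderedOn γ S F) (hF : F ⊆ S.sym2)
    {μ ν : Equiv.Perm α} (hfix : ∀ v ∉ S, ν v = v) (hν : ∀ v ∈ S, μ v ∈ S → ν v = μ v) :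
    γ * #{v ∈ S | ν v ≠ v} ≤ #(F ∆ F.image (Sym2.map μ)) :=
  (h ν hfix).trans (by exact_mod_cast card_symmDiff_image_le_of_eqOn hF hν)

theorem mul_card_moved_le_add (h : IsRobustlySelfOrderedOn γ S F) (hF : F ⊆ S.sym2) (hγ : 0 ≤ γ)
    (μ : Equiv.Perm α) :
    γ * #{v ∈ S | μ v ≠ v} ≤ #(F ∆ F.image (Sym2.map μ)) + γ * #{v ∈ S | μ v ∉ S} := by
  obtain ⟨ν, hfix, hν⟩ := exists_perm_fixing_compl_eqOn S μ
  have hmoved : #{v ∈ S | μ v ≠ v} ≤ #{v ∈ S | ν v ≠ v} + #{v ∈ S | μ v ∉ S} :=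
    (card_le_card (by grind)).trans (card_union_le _ _)
  calc γ * #{v ∈ S | μ v ≠ v}
      ≤ γ * (#{v ∈ S | ν v ≠ v} + #{v ∈ S | μ v ∉ S}) := by gcongr; exact_mod_cast hmoved
    _ = γ * #{v ∈ S | ν v ≠ v} + γ * #{v ∈ S | μ v ∉ S} := mul_add _ _ _
    _ ≤ _ := by gcongr; exact h.mul_card_moved_le_of_eqOn hF hfix hν

theorem mul_card_moved_le (h : IsRobustlySelfOrderedOn γ S F) (hF : F ⊆ S.sym2) (hγ : 0 ≤ γ)
    {μ : Equiv.Perm α} (hμ : #{v ∈ S | μ v ∉ S} ≠ 1) :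
    γ * #{v ∈ S | μ v ≠ v} ≤ #(F ∆ F.image (Sym2.map μ)) := by
  obtain ⟨ν, hfix, hν⟩ := exists_perm_fixing_compl_eqOn S μ
  obtain ⟨σ, hσ, hne⟩ := exists_perm_comp_apply_ne hμ ν
  have hσ_stay : ∀ v ∈ S, μ v ∈ S → (ν * σ) v = μ v := fun v hv hμv => by
    rw [Equiv.Perm.mul_apply, hσ v (by grind), hν v hv hμv]
  have hmoved : #{v ∈ S | μ v ≠ v} ≤ #{v ∈ S | (ν * σ) v ≠ v} := by
    refine card_le_card fun v hv => ?_
    obtain ⟨hvS, hv⟩ := mem_filter.1 hv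
    refine mem_filter.2 ⟨hvS, ?_⟩
    by_cases hμv : μ v ∈ S
    · rwa [hσ_stay v hvS hμv]
    · exact hne v (mem_filter.2 ⟨hvS, hμv⟩)
  calc γ * #{v ∈ S | μ v ≠ v}
      ≤ γ * #{v ∈ S | (ν * σ) v ≠ v} := by gcongr
    _ ≤ _ := h.mul_card_moved_le_of_eqOn hF
        (fun v hv => by rw [Equiv.Perm.mul_apply, hσ v (by grind), hfix v hv]) hσ_stay

theorem le_of_edgeDegree_le (h : IsRobustlySelfOrderedOn γ S F) (hF : F ⊆ S.sym2)
    (hloop : ∀ e ∈ F, ¬ e.IsDiag) (hS : S.Nontrivial) {d : ℕ} (hd : ∀ v ∈ S, edgeDegree F v ≤ d) :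
    γ ≤ d := by
  obtain ⟨c, hc, hsupp⟩ := (countable_toSet S).exists_cycleOn
  have hmoved : {v ∈ S | c v ≠ v} = S := filter_true_of_mem fun v hv => hc.apply_ne hS hv
  have hedges : #(F ∆ F.image (Sym2.map c)) ≤ d * #S := calc
    #(F ∆ F.image (Sym2.map c)) = 2 * #(F \ F.image (Sym2.map c)) :=
      card_symmDiff_image F (Sym2.map.injective c.injective)
    _ ≤ 2 * #F := by gcongr; exact sdiff_subset
    _ = ∑ v ∈ S, edgeDegree F v := two_mul_card_eq_sum_edgeDegree hF hloop
    _ ≤ d * #S := by simpa [mul_comm] using sum_le_card_nsmul S _ d hd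
  have hrobust := h c fun v hv => by_contra fun hcv => hv (hsupp hcv)
  rw [hmoved] at hrobust
  exact le_of_mul_le_mul_right (hrobust.trans (by exact_mod_cast hedges))
    (by exact_mod_cast hS.nonempty.card_pos)

theorem div_anti {a b : ℝ} (h : IsRobustlySelfOrderedOn (γ / a) S F) (ha : 0 < a) (hab : a ≤ b) :
    IsRobustlySelfOrderedOn (γ / b) S F := fun μ hμ => by
  have hle := h μ hμ
  rw [div_mul_eq_mul_div, div_le_iff₀ ha] at hle
  rw [div_mul_eq_mul_div, div_le_iff₀ (ha.trans_le hab)]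
  exact hle.trans (by gcongr)

end IsRobustlySelfOrderedOn

theorem isRobustlySelfOrderedOn_iff [Fintype α] {γ : ℝ} {S : Finset α} {F : Finset (Sym2 α)} :
    IsRobustlySelfOrderedOn γ S F ↔ ∀ μ : Equiv.Perm α, (∀ v ∉ S, μ v = v) →
      γ * #{v | μ v ≠ v} ≤ #(F ∆ F.image (Sym2.map μ)) := by
  refine forall₂_congr fun μ hμ => ?_
  have hmoved : ({v ∈ S | μ v ≠ v} : Finset α) = ({v | μ v ≠ v} : Finset α) := by
    ext v
    simpa using fun hv => not_imp_comm.1 (hμ v) hv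
  rw [hmoved]

section Cut

variable {S T : Finset α} {G : Finset (Sym2 α)} {μ : Equiv.Perm α} {d : ℕ}

theorem image_union_image_perm (hμ : ∀ v ∉ S ∪ T, μ v = v) : S.image μ ∪ T.image μ = S ∪ T := by
  rw [← image_union, image_perm_eq_self hμ]

theorem card_image_sdiff_eq_of_disjoint (hST : Disjoint S T) (hμ : ∀ v ∉ S ∪ T, μ v = v) :
    #(T.image μ \ T) = #(S.image μ \ S) := by
  have hdisj : Disjoint (S.image μ) (T.image μ) := (disjoint_image μ.injective).2 hST
  have hunion := image_union_image_perm hμ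
  have hcompl : T.image μ \ T = S \ S.image μ := by
    rw [disjoint_left] at hST hdisj
    grind
  rw [hcompl, card_sdiff_comm (card_image_of_injective S μ.injective).symm]

theorem apply_mem_right (hμ : ∀ v ∉ S ∪ T, μ v = v) {v : α} (hv : v ∈ S)
    (hμv : μ v ∉ S) : μ v ∈ T := by
  have hunion : μ v ∈ S ∪ T :=
    image_perm_eq_self hμ ▸ mem_image_of_mem μ (mem_union_left T hv)
  exact (mem_union.1 hunion).resolve_left hμv

theorem card_image_sdiff_le_card_symmDiff (hμ : ∀ v ∉ S ∪ T, μ v = v)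
    (hgap : ∀ u ∈ S, ∀ w ∈ T, edgeDegree G u < edgeDegree G w) :
    #(S.image μ \ S) ≤ #(G ∆ G.image (Sym2.map μ)) := by
  rw [card_symmDiff_image G (Sym2.map.injective μ.injective)]
  refine card_le_two_mul_card_sdiff_of_edgeDegree_lt fun w hw => ?_
  obtain ⟨hw, hwS⟩ := mem_sdiff.1 hw
  obtain ⟨u, hu, rfl⟩ := mem_image.1 hw
  rw [edgeDegree_image_map]
  exact hgap u hu _ (apply_mem_right hμ hu hwS)

theorem card_symmDiff_induced_add_le (hST : Disjoint S T) (hμ : ∀ v ∉ S ∪ T, μ v = v)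
    (hloop : ∀ e ∈ G, ¬ e.IsDiag) (hd : ∀ v, edgeDegree G v ≤ d) :
    #((G ∩ S.sym2) ∆ (G ∩ S.sym2).image (Sym2.map μ)) +
        #((G ∩ T.sym2) ∆ (G ∩ T.sym2).image (Sym2.map μ)) ≤
      #(G ∆ G.image (Sym2.map μ)) + 2 * #(S.image μ \ S) * d := by
  have hST' : Disjoint (S.image μ) (T.image μ) := (disjoint_image μ.injective).2 hST
  simp only [image_inter _ _ (Sym2.map.injective μ.injective), ← sym2_image]
  refine (card_symmDiff_inter_add_card_symmDiff_inter_le (disjoint_sym2 hST)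
    (disjoint_sym2 hST')).trans (Nat.add_le_add_left ?_ _)
  calc #(G ∩ (S.sym2 ∆ (S.image μ).sym2)) + #(G ∩ (T.sym2 ∆ (T.image μ).sym2))
      ≤ ∑ w ∈ S ∆ S.image μ, edgeDegree G w :=
        card_inter_sym2_symmDiff_add_le hST hST' (image_union_image_perm hμ).symm hloop
    _ ≤ #(S ∆ S.image μ) * d := sum_le_card_nsmul _ _ _ fun w _ => hd w
    _ = 2 * #(S.image μ \ S) * d := by
        rw [card_symmDiff_image S μ.injective,
          card_sdiff_comm (card_image_of_injective S μ.injective)]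

variable {γ : ℝ}

theorem le_of_isRobustlySelfOrderedOn_inter (hS : IsRobustlySelfOrderedOn γ S (G ∩ S.sym2))
    (hT : IsRobustlySelfOrderedOn γ T (G ∩ T.sym2)) (hloop : ∀ e ∈ G, ¬ e.IsDiag)
    (hd : ∀ v, edgeDegree G v ≤ d) (hnontrivial : S.Nontrivial ∨ T.Nontrivial) : γ ≤ d := by
  have hle : ∀ U : Finset α, IsRobustlySelfOrderedOn γ U (G ∩ U.sym2) → U.Nontrivial → γ ≤ d :=
    fun U hU hU' => hU.le_of_edgeDegree_le inter_subset_right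
      (fun e he => hloop e (mem_inter.1 he).1) hU'
      fun v _ => (edgeDegree_mono inter_subset_left v).trans (hd v)
  exact hnontrivial.elim (hle S hS) (hle T hT)

theorem mul_card_moved_le_of_card_cut_ne_one (hST : Disjoint S T) (hμ : ∀ v ∉ S ∪ T, μ v = v)
    (hS : IsRobustlySelfOrderedOn γ S (G ∩ S.sym2))
    (hT : IsRobustlySelfOrderedOn γ T (G ∩ T.sym2)) (hloop : ∀ e ∈ G, ¬ e.IsDiag)
    (hd : ∀ v, edgeDegree G v ≤ d) (hgap : ∀ u ∈ S, ∀ w ∈ T, edgeDegree G u < edgeDegree G w)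
    (hγ : 0 ≤ γ) (hk : #(S.image μ \ S) ≠ 1) :
    γ * (#{v ∈ S | μ v ≠ v} + #{v ∈ T | μ v ≠ v}) ≤
      #(G ∆ G.image (Sym2.map μ)) * (2 * d + 1) := by
  have hcut := card_symmDiff_induced_add_le hST hμ hloop hd
  have hcross := card_image_sdiff_le_card_symmDiff hμ hgap
  have hmovedS := hS.mul_card_moved_le inter_subset_right hγ (μ := μ)
    (by rwa [card_filter_apply_notMem])
  have hmovedT := hT.mul_card_moved_le inter_subset_right hγ (μ := μ)
    (by rwa [card_filter_apply_notMem, card_image_sdiff_eq_of_disjoint hST hμ])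
  set Δ := #(G ∆ G.image (Sym2.map μ))
  calc γ * (#{v ∈ S | μ v ≠ v} + #{v ∈ T | μ v ≠ v})
      ≤ Δ + 2 * #(S.image μ \ S) * d := by
        rw [mul_add]
        exact (add_le_add hmovedS hmovedT).trans (by exact_mod_cast hcut)
    _ ≤ Δ + 2 * Δ * d := by gcongr
    _ = Δ * (2 * d + 1) := by ring

theorem mul_card_moved_le_of_card_cut_eq_one (hST : Disjoint S T) (hμ : ∀ v ∉ S ∪ T, μ v = v)
    (hG : G ⊆ (S ∪ T).sym2) (hS : IsRobustlySelfOrderedOn γ S (G ∩ S.sym2))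
    (hT : IsRobustlySelfOrderedOn γ T (G ∩ T.sym2)) (hloop : ∀ e ∈ G, ¬ e.IsDiag)
    (hd : ∀ v, edgeDegree G v ≤ d) (hgap : ∀ u ∈ S, ∀ w ∈ T, edgeDegree G u < edgeDegree G w)
    (hγ : 0 ≤ γ) (hk : #(S.image μ \ S) = 1) :
    γ * (#{v ∈ S | μ v ≠ v} + #{v ∈ T | μ v ≠ v}) ≤
      #(G ∆ G.image (Sym2.map μ)) * (2 * d + 1) := by
  have hcut := card_symmDiff_induced_add_le hST hμ hloop hd
  have hcross := card_image_sdiff_le_card_symmDiff hμ hgap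
  have hmovedS := hS.mul_card_moved_le_add inter_subset_right hγ μ
  have hmovedT := hT.mul_card_moved_le_add inter_subset_right hγ μ
  rw [card_filter_apply_notMem, hk, Nat.cast_one, mul_one] at hmovedS
  rw [card_filter_apply_notMem, card_image_sdiff_eq_of_disjoint hST hμ, hk, Nat.cast_one,
    mul_one] at hmovedT
  rw [hk, mul_one] at hcut
  rw [hk] at hcross
  have hγd : γ ≤ d := by
    obtain ⟨u, hu⟩ : {v ∈ S | μ v ∉ S}.Nonempty :=
      card_pos.1 (by rw [card_filter_apply_notMem, hk]; exact one_pos)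
    obtain ⟨hu, hμuS⟩ := mem_filter.1 hu
    have hμu := apply_mem_right hμ hu hμuS
    exact le_of_isRobustlySelfOrderedOn_inter hS hT hloop hd
      (nontrivial_or_nontrivial_of_edgeDegree_lt hG hloop hu hμu (hgap u hu _ hμu))
  have htwo : 2 ≤ #(G ∆ G.image (Sym2.map μ)) := by
    have := card_symmDiff_image G (Sym2.map.injective μ.injective)
    lia
  set Δ := #(G ∆ G.image (Sym2.map μ))
  have hcut := Nat.cast_le (α := ℝ).2 hcut
  push_cast at hcut
  calc γ * (#{v ∈ S | μ v ≠ v} + #{v ∈ T | μ v ≠ v})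
      ≤ Δ + 2 * d + 2 * γ := by linarith
    _ ≤ Δ + 2 * d + 2 * d := by gcongr
    _ = Δ + 2 * d * 2 := by ring
    _ ≤ Δ + 2 * d * Δ := by gcongr; exact_mod_cast htwo
    _ = Δ * (2 * d + 1) := by ring

theorem isRobustlySelfOrderedOn_union_of_inter (hST : Disjoint S T) (hG : G ⊆ (S ∪ T).sym2)
    (hS : IsRobustlySelfOrderedOn γ S (G ∩ S.sym2))
    (hT : IsRobustlySelfOrderedOn γ T (G ∩ T.sym2)) (hloop : ∀ e ∈ G, ¬ e.IsDiag)
    (hd : ∀ v, edgeDegree G v ≤ d) (hgap : ∀ u ∈ S, ∀ w ∈ T, edgeDegree G u < edgeDegree G w) :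
    IsRobustlySelfOrderedOn (γ / (2 * d + 1)) (S ∪ T) G := by
  intro μ hμ
  rw [div_mul_eq_mul_div, div_le_iff₀ (by positivity)]
  obtain hγ | hγ := le_total γ 0
  · exact (mul_nonpos_of_nonpos_of_nonneg hγ (by positivity)).trans (by positivity)
  rw [filter_union, card_union_of_disjoint (disjoint_filter_filter hST), Nat.cast_add]
  by_cases hk : #(S.image μ \ S) = 1
  · exact mul_card_moved_le_of_card_cut_eq_one hST hμ hG hS hT hloop hd hgap hγ hk
  · exact mul_card_moved_le_of_card_cut_ne_one hST hμ hS hT hloop hd hgap hγ hk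

end Cut

theorem union_inter_sym2_eq_left {S T : Finset α} (hST : Disjoint S T) {E₁ E₂ E : Finset (Sym2 α)}
    (hE₁ : E₁ ⊆ S.sym2) (hE₂ : E₂ ⊆ T.sym2) (hE : ∀ e ∈ E, ∃ b ∈ T, b ∈ e) :
    (E₁ ∪ E₂ ∪ E) ∩ S.sym2 = E₁ := by
  have hE₂S : Disjoint E₂ S.sym2 := (disjoint_sym2 hST.symm).mono_left hE₂
  have hES : Disjoint E S.sym2 := disjoint_left.2 fun e he heS => by
    obtain ⟨b, hbT, hbe⟩ := hE e he
    exact disjoint_left.1 hST (mem_sym2_iff.1 heS b hbe) hbT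
  rw [union_inter_distrib_right, union_inter_distrib_right, inter_eq_left.2 hE₁,
    disjoint_iff_inter_eq_empty.1 hE₂S, disjoint_iff_inter_eq_empty.1 hES, union_empty, union_empty]

theorem stmt6_general {V₁ V₂ : Finset α} {E₁ E₂ E : Finset (Sym2 α)} {γ : ℝ} {d : ℕ}
    (hV : Disjoint V₁ V₂) (hE₁ : E₁ ⊆ V₁.sym2) (hE₂ : E₂ ⊆ V₂.sym2)
    (hE : ∀ e ∈ E, ∃ a ∈ V₁, ∃ b ∈ V₂, e = s(a, b)) (hloop : ∀ e ∈ E₁ ∪ E₂ ∪ E, ¬ e.IsDiag)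
    (h₁ : IsRobustlySelfOrderedOn γ V₁ E₁) (h₂ : IsRobustlySelfOrderedOn γ V₂ E₂)
    (hd : ∀ v, edgeDegree (E₁ ∪ E₂ ∪ E) v ≤ d)
    (hgap : ∀ u ∈ V₁, ∀ w ∈ V₂, edgeDegree (E₁ ∪ E₂ ∪ E) u < edgeDegree (E₁ ∪ E₂ ∪ E) w) :
    IsRobustlySelfOrderedOn (γ / (2 * d + 1)) (V₁ ∪ V₂) (E₁ ∪ E₂ ∪ E) := by
  have hG : E₁ ∪ E₂ ∪ E ⊆ (V₁ ∪ V₂).sym2 := by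
    refine union_subset (union_subset (hE₁.trans (sym2_mono subset_union_left))
      (hE₂.trans (sym2_mono subset_union_right))) fun e he => ?_
    obtain ⟨a, ha, b, hb, rfl⟩ := hE e he
    exact mk_mem_sym2_iff.2 ⟨mem_union_left _ ha, mem_union_right _ hb⟩
  have hV₁ : (E₁ ∪ E₂ ∪ E) ∩ V₁.sym2 = E₁ := union_inter_sym2_eq_left hV hE₁ hE₂ fun e he => by
    obtain ⟨a, -, b, hb, rfl⟩ := hE e he
    exact ⟨b, hb, Sym2.mem_mk_right a b⟩
  have hV₂ : (E₁ ∪ E₂ ∪ E) ∩ V₂.sym2 = E₂ := by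
    rw [union_comm E₁]
    refine union_inter_sym2_eq_left hV.symm hE₂ hE₁ fun e he => ?_
    obtain ⟨a, ha, b, -, rfl⟩ := hE e he
    exact ⟨a, ha, Sym2.mem_mk_left a b⟩
  exact isRobustlySelfOrderedOn_union_of_inter hV hG (hV₁.symm ▸ h₁) (hV₂.symm ▸ h₂) hloop hd hgap

end

/-- Combining two `γ`-robustly self-ordered graphs `G₁ = (V₁, E₁)` and `G₂ = (V₂, E₂)` with an
arbitrary bipartite graph `E` between them, if the resulting graph has maximum degree `d` and
every vertex of `V₁` has degree strictly smaller than every vertex of `V₂`, then the combined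
graph is `γ/(2d+3)`-robustly self-ordered. -/
theorem stmt6 {α : Type*} [Fintype α] [DecidableEq α] (γ : ℝ) (d : ℕ)
    (V1 V2 : Finset α) (hdisj : Disjoint V1 V2) (hcover : V1 ∪ V2 = Finset.univ)
    (E1 E2 E : Finset (Sym2 α))
    (hE1 : ∀ e ∈ E1, ∀ v ∈ e, v ∈ V1)
    (hE2 : ∀ e ∈ E2, ∀ v ∈ e, v ∈ V2)
    (hE : ∀ e ∈ E, ∃ a ∈ V1, ∃ b ∈ V2, e = s(a, b))
    (hsimple : ∀ e ∈ E1 ∪ E2 ∪ E, ¬ e.IsDiag)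
    (hrso1 : ∀ μ : Equiv.Perm α, (∀ v ∉ V1, μ v = v) →
      γ * ((Finset.univ.filter (fun v => μ v ≠ v)).card : ℝ) ≤
        ((symmDiff E1 (E1.image (Sym2.map ⇑μ))).card : ℝ))
    (hrso2 : ∀ μ : Equiv.Perm α, (∀ v ∉ V2, μ v = v) →
      γ * ((Finset.univ.filter (fun v => μ v ≠ v)).card : ℝ) ≤
        ((symmDiff E2 (E2.image (Sym2.map ⇑μ))).card : ℝ))
    (hmaxdeg : ∀ v : α, ((E1 ∪ E2 ∪ E).filter (fun e => v ∈ e)).card ≤ d)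
    (hgap : ∀ u ∈ V1, ∀ w ∈ V2,
      ((E1 ∪ E2 ∪ E).filter (fun e => u ∈ e)).card <
        ((E1 ∪ E2 ∪ E).filter (fun e => w ∈ e)).card) :
    ∀ μ : Equiv.Perm α,
      (γ / (2 * d + 3)) * ((Finset.univ.filter (fun v => μ v ≠ v)).card : ℝ) ≤
        ((symmDiff (E1 ∪ E2 ∪ E) ((E1 ∪ E2 ∪ E).image (Sym2.map ⇑μ))).card : ℝ) := by
  intro μ
  have h := stmt6_general hdisj (fun e he => mem_sym2_iff.2 (hE1 e he))
    (fun e he => mem_sym2_iff.2 (hE2 e he)) hE hsimple (isRobustlySelfOrderedOn_iff.2 hrso1)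
    (isRobustlySelfOrderedOn_iff.2 hrso2) hmaxdeg hgap
  exact isRobustlySelfOrderedOn_iff.1 (h.div_anti (by positivity) (by linarith)) μ
    (by simp [hcover])
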